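/- arXiv:1011.4115 — 4 statements merged into one kernel-verified Lean document; each statement's English description precedes it below -/
import Mathlib

section
/- Let r ∈ ℝ and λ = tanh r. On ℂ² ⊗ ℂ² define the jump operators A = cosh(r)·(σ⁻ ⊗ I₂) + sinh(r)·(I₂ ⊗ σ⁺) and B = cosh(r)·(I₂ ⊗ σ⁻) + sinh(r)·(σ⁺ ⊗ I₂), and the unit vector ψ = (|00⟩ − λ|11⟩)/√(1+λ²). Then Aψ = 0 and Bψ = 0; consequently the pure state ψψ† is a steady state of the entangling dissipative dynamics: 𝔏^A(ψψ†) + 𝔏^B(ψψ†) = 0. -/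
/-!
Each Lindblad term `𝔏^A(ψψ†)` contains `A * ψψ†` or its adjoint as a factor, so it vanishes as soon
as `A ψ = 0` (`lindblad_vecMulVec_eq_zero`). The two dark-state equations hold because
`σ⁻ ⊗ I` sends `-λ|11⟩` to `-λ|01⟩` and `I ⊗ σ⁺` sends `|00⟩` to `|01⟩`, so the only surviving
coefficient of `A ψ` is proportional to `sinh r - λ cosh r = 0`; symmetrically for `B` and `|10⟩`.
-/

open Matrix Kronecker

/-- The Lindblad term `𝔏^A(ρ) = AρA† − (1/2)(A†Aρ + ρA†A)`. -/
noncomputable def Lindblad {ι : Type*} [Fintype ι] [DecidableEq ι]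
    (A ρ : Matrix ι ι ℂ) : Matrix ι ι ℂ :=
  A * ρ * Aᴴ - (1 / 2 : ℂ) • (Aᴴ * A * ρ + ρ * (Aᴴ * A))

/-- `σ⁻ = |0⟩⟨1|` on ℂ². -/
noncomputable def sigmaMinus : Matrix (Fin 2) (Fin 2) ℂ := !![0, 1; 0, 0]

/-- `σ⁺ = |1⟩⟨0|` on ℂ². -/
noncomputable def sigmaPlus : Matrix (Fin 2) (Fin 2) ℂ := !![0, 0; 1, 0]

/-- A pure state annihilated by the jump operator is stationary for its Lindblad term. -/
theorem lindblad_vecMulVec_eq_zero {ι : Type*} [Fintype ι] [DecidableEq ι]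
    (A : Matrix ι ι ℂ) (v : ι → ℂ) (h : A *ᵥ v = 0) :
    Lindblad A (vecMulVec v (star v)) = 0 := by
  have h₁ : A * vecMulVec v (star v) = 0 := by
    rw [mul_vecMulVec, h, zero_vecMulVec]
  have h₂ : vecMulVec v (star v) * Aᴴ = 0 := by
    rw [vecMulVec_mul, ← star_mulVec, h, star_zero, vecMulVec_zero]
  rw [Lindblad, h₁, Matrix.mul_assoc Aᴴ, h₁, ← Matrix.mul_assoc _ Aᴴ, h₂]
  simp

theorem steady_state_of_entangling_dissipation (r : ℝ) :
    let lam : ℝ := Real.tanh r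
    let A : Matrix (Fin 2 × Fin 2) (Fin 2 × Fin 2) ℂ :=
      (Real.cosh r : ℂ) • (sigmaMinus ⊗ₖ (1 : Matrix (Fin 2) (Fin 2) ℂ)) +
        (Real.sinh r : ℂ) • ((1 : Matrix (Fin 2) (Fin 2) ℂ) ⊗ₖ sigmaPlus)
    let B : Matrix (Fin 2 × Fin 2) (Fin 2 × Fin 2) ℂ :=
      (Real.cosh r : ℂ) • ((1 : Matrix (Fin 2) (Fin 2) ℂ) ⊗ₖ sigmaMinus) +
        (Real.sinh r : ℂ) • (sigmaPlus ⊗ₖ (1 : Matrix (Fin 2) (Fin 2) ℂ))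
    let e00 : Fin 2 × Fin 2 → ℂ := Pi.single ((0 : Fin 2), (0 : Fin 2)) 1
    let e11 : Fin 2 × Fin 2 → ℂ := Pi.single ((1 : Fin 2), (1 : Fin 2)) 1
    let ψ : Fin 2 × Fin 2 → ℂ :=
      ((Real.sqrt (1 + lam ^ 2) : ℂ))⁻¹ • (e00 - (lam : ℂ) • e11)
    A.mulVec ψ = 0 ∧ B.mulVec ψ = 0 ∧
      Lindblad A (Matrix.vecMulVec ψ (star ψ)) +
        Lindblad B (Matrix.vecMulVec ψ (star ψ)) = 0 := by
  intro lam A B e00 e11 ψ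
  have hlam : (Real.cosh r : ℂ) * (lam : ℂ) = (Real.sinh r : ℂ) := by
    have h : Real.cosh r * lam = Real.sinh r := by
      simp only [lam, Real.tanh_eq_sinh_div_cosh]
      field_simp [(Real.cosh_pos r).ne']
    exact_mod_cast h
  have hA : A *ᵥ ψ = 0 := by
    simp only [ψ, mulVec_smul]
    refine smul_eq_zero_of_right _ ?_
    ext ⟨i, j⟩
    fin_cases i <;> fin_cases j <;>
      simp [A, e00, e11, sigmaMinus, sigmaPlus, mulVec, dotProduct, Fintype.sum_prod_type,
        Pi.single_apply, -Complex.ofReal_cosh, -Complex.ofReal_sinh, hlam]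
  have hB : B *ᵥ ψ = 0 := by
    simp only [ψ, mulVec_smul]
    refine smul_eq_zero_of_right _ ?_
    ext ⟨i, j⟩
    fin_cases i <;> fin_cases j <;>
      simp [B, e00, e11, sigmaMinus, sigmaPlus, mulVec, dotProduct, Fintype.sum_prod_type,
        Pi.single_apply, -Complex.ofReal_cosh, -Complex.ofReal_sinh, hlam]
  refine ⟨hA, hB, ?_⟩
  rw [lindblad_vecMulVec_eq_zero A ψ hA, lindblad_vecMulVec_eq_zero B ψ hB, add_zero]
end

section
/- Let r ∈ ℝ and λ = tanh r. On ℂ² ⊗ ℂ² define A = cosh(r)·(σ⁻ ⊗ I₂) + sinh(r)·(I₂ ⊗ σ⁺), B = cosh(r)·(I₂ ⊗ σ⁻) + sinh(r)·(σ⁺ ⊗ I₂), and ψ = (|00⟩ − λ|11⟩)/√(1+λ²). Then ψψ† is the unique steady state of the dissipative evolution: if ρ ∈ M₄(ℂ) is a density matrix with 𝔏^A(ρ) + 𝔏^B(ρ) = 0, then ρ = ψψ†. -/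
/-!
Write `c = cosh r`, `s = sinh r`, and put `u = s|00⟩ + c|11⟩`, `w = c|00⟩ + s|11⟩`,
`φ = c|00⟩ - s|11⟩`, so that `ψ` is the normalisation of `φ` and `φ ⊥ u`.  Then
`A = |01⟩⟨u| + |w⟩⟨10|` and `B = |10⟩⟨u| + |w⟩⟨01|`, hence
`A†A + B†B = 2|u⟩⟨u| + (c² + s²)(|01⟩⟨01| + |10⟩⟨10|)`.

Sandwiching the steady-state equation between `φ` and `φ` kills the anticommutator, because
`A†A + B†B` annihilates `φ`, and leaves `(⟨01|ρ|01⟩ + ⟨10|ρ|10⟩) ⟨φ|w⟩² = 0` with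
`⟨φ|w⟩ = c² - s² = 1`.  The diagonal entries at `01` and `10` give
`⟨u|ρ|u⟩ = (c² + s²)⟨01|ρ|01⟩ = (c² + s²)⟨10|ρ|10⟩`.  So all three expectations vanish
(`expectations_eq_zero`); positivity then forces `ρ` to annihilate `|01⟩`, `|10⟩` and `u`, the
orthogonal complement of `ψ`, and the trace fixes the remaining scalar.
-/

open Matrix Kronecker
open scoped ComplexOrder

/-- The operator `c (σ⁻ ⊗ I) + s (I ⊗ σ⁺)`. -/
noncomputable def jumpA (c s : ℝ) : Matrix (Fin 2 × Fin 2) (Fin 2 × Fin 2) ℂ :=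
  (c : ℂ) • (sigmaMinus ⊗ₖ (1 : Matrix (Fin 2) (Fin 2) ℂ)) +
    (s : ℂ) • ((1 : Matrix (Fin 2) (Fin 2) ℂ) ⊗ₖ sigmaPlus)

/-- The operator `c (I ⊗ σ⁻) + s (σ⁺ ⊗ I)`. -/
noncomputable def jumpB (c s : ℝ) : Matrix (Fin 2 × Fin 2) (Fin 2 × Fin 2) ℂ :=
  (c : ℂ) • ((1 : Matrix (Fin 2) (Fin 2) ℂ) ⊗ₖ sigmaMinus) +
    (s : ℂ) • (sigmaPlus ⊗ₖ (1 : Matrix (Fin 2) (Fin 2) ℂ))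

/-- The expectations of a steady state `ρ` in `|01⟩`, `|10⟩` and `u = s|00⟩ + c|11⟩` vanish. -/
lemma expectations_eq_zero {c s : ℝ} (hcs : c ^ 2 - s ^ 2 = 1)
    {ρ : Matrix (Fin 2 × Fin 2) (Fin 2 × Fin 2) ℂ}
    (h : Lindblad (jumpA c s) ρ + Lindblad (jumpB c s) ρ = 0) :
    ρ (0, 1) (0, 1) = 0 ∧ ρ (1, 0) (1, 0) = 0 ∧
      (s : ℂ) * (s * ρ (0, 0) (0, 0) + c * ρ (0, 0) (1, 1)) +
        c * (s * ρ (1, 1) (0, 0) + c * ρ (1, 1) (1, 1)) = 0 := by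
  have hcs' : (c : ℂ) ^ 2 - (s : ℂ) ^ 2 = 1 := by exact_mod_cast hcs
  have hn : (c : ℂ) ^ 2 + (s : ℂ) ^ 2 ≠ 0 := by
    have : c ^ 2 + s ^ 2 ≠ 0 := by nlinarith [sq_nonneg s]
    exact_mod_cast this
  have e (i j) := congrFun (congrFun h i) j
  have e1 := e (0, 1) (0, 1)
  have e2 := e (1, 0) (1, 0)
  have f1 := e (0, 0) (0, 0)
  have f2 := e (0, 0) (1, 1)
  have f3 := e (1, 1) (0, 0)
  have f4 := e (1, 1) (1, 1)
  clear e h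
  simp [Lindblad, jumpA, jumpB, sigmaMinus, sigmaPlus, Matrix.mul_apply, Fintype.sum_prod_type,
    Matrix.one_apply] at e1 e2 f1 f2 f3 f4
  -- the `φφ` entry of the equation
  have hpq : ρ (0, 1) (0, 1) + ρ (1, 0) (1, 0) = 0 := by
    have : ((c : ℂ) ^ 2 - (s : ℂ) ^ 2) ^ 2 * (ρ (0, 1) (0, 1) + ρ (1, 0) (1, 0)) = 0 := by
      linear_combination (c : ℂ) ^ 2 * f1 - c * s * f2 - c * s * f3 + (s : ℂ) ^ 2 * f4
    simpa [hcs'] using this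
  have hd : ((c : ℂ) ^ 2 + (s : ℂ) ^ 2) * (ρ (0, 1) (0, 1) - ρ (1, 0) (1, 0)) = 0 := by
    linear_combination e2 - e1
  have hd' := (mul_eq_zero.mp hd).resolve_left hn
  have hp : ρ (0, 1) (0, 1) = 0 := by linear_combination (hpq + hd') / 2
  have hq : ρ (1, 0) (1, 0) = 0 := by linear_combination (hpq - hd') / 2
  refine ⟨hp, hq, ?_⟩
  linear_combination e1 + ((c : ℂ) ^ 2 + (s : ℂ) ^ 2) * hp

theorem unique_steady_state_of_entangling_dissipation (r : ℝ) :
    let lam : ℝ := Real.tanh r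
    let A : Matrix (Fin 2 × Fin 2) (Fin 2 × Fin 2) ℂ :=
      (Real.cosh r : ℂ) • (sigmaMinus ⊗ₖ (1 : Matrix (Fin 2) (Fin 2) ℂ)) +
        (Real.sinh r : ℂ) • ((1 : Matrix (Fin 2) (Fin 2) ℂ) ⊗ₖ sigmaPlus)
    let B : Matrix (Fin 2 × Fin 2) (Fin 2 × Fin 2) ℂ :=
      (Real.cosh r : ℂ) • ((1 : Matrix (Fin 2) (Fin 2) ℂ) ⊗ₖ sigmaMinus) +
        (Real.sinh r : ℂ) • (sigmaPlus ⊗ₖ (1 : Matrix (Fin 2) (Fin 2) ℂ))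
    let e00 : Fin 2 × Fin 2 → ℂ := Pi.single ((0 : Fin 2), (0 : Fin 2)) 1
    let e11 : Fin 2 × Fin 2 → ℂ := Pi.single ((1 : Fin 2), (1 : Fin 2)) 1
    let ψ : Fin 2 × Fin 2 → ℂ :=
      ((Real.sqrt (1 + lam ^ 2) : ℂ))⁻¹ • (e00 - (lam : ℂ) • e11)
    ∀ ρ : Matrix (Fin 2 × Fin 2) (Fin 2 × Fin 2) ℂ,
      ρ.PosSemidef → ρ.trace = 1 → Lindblad A ρ + Lindblad B ρ = 0 →
        ρ = Matrix.vecMulVec ψ (star ψ) := by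
  intro lam A B e00 e11 ψ ρ hρ htr h
  obtain ⟨hp, hq, hx⟩ := expectations_eq_zero (Real.cosh_sq_sub_sinh_sq r) h
  have hc : (Real.cosh r : ℂ) ≠ 0 := by exact_mod_cast (Real.cosh_pos r).ne'
  have hlam : (lam : ℂ) * Real.cosh r = Real.sinh r := by
    have : lam * Real.cosh r = Real.sinh r := by
      simp only [lam, Real.tanh_eq_sinh_div_cosh]
      field_simp [(Real.cosh_pos r).ne']
    exact_mod_cast this
  have k1 : ρ *ᵥ Pi.single (0, 1) 1 = 0 := by
    rw [← hρ.dotProduct_mulVec_zero_iff]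
    simpa [Matrix.mulVec, dotProduct, Fintype.sum_prod_type, Pi.single_apply] using hp
  have k2 : ρ *ᵥ Pi.single (1, 0) 1 = 0 := by
    rw [← hρ.dotProduct_mulVec_zero_iff]
    simpa [Matrix.mulVec, dotProduct, Fintype.sum_prod_type, Pi.single_apply] using hq
  have k3 : ρ *ᵥ ((Real.sinh r : ℂ) • e00 + (Real.cosh r : ℂ) • e11) = 0 := by
    rw [← hρ.dotProduct_mulVec_zero_iff]
    simp [e00, e11, Matrix.mulVec, dotProduct, Fintype.sum_prod_type, Pi.single_apply,
      ← Complex.cosh_conj, ← Complex.sinh_conj] at hx ⊢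
    linear_combination hx
  have c1 (i) : ρ i (0, 1) = 0 := by simpa using congrFun k1 i
  have c2 (i) : ρ i (1, 0) = 0 := by simpa using congrFun k2 i
  have c3 (i) : ρ i (1, 1) = -lam * ρ i (0, 0) := by
    have := congrFun k3 i
    simp only [e00, e11, Matrix.mulVec_add, Matrix.mulVec_smul, Matrix.mulVec_single_one,
      Pi.add_apply, Pi.smul_apply, Matrix.col_apply, smul_eq_mul, Pi.zero_apply] at this
    apply mul_left_cancel₀ hc
    linear_combination this + ρ i (0, 0) * hlam
  have herm (i j) : ρ i j = star (ρ j i) := (hρ.isHermitian.apply i j).symm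
  have r1 (j) : ρ (0, 1) j = 0 := by rw [herm, c1, star_zero]
  have r2 (j) : ρ (1, 0) j = 0 := by rw [herm, c2, star_zero]
  have r3 : ρ (1, 1) (0, 0) = -lam * ρ (0, 0) (0, 0) := by
    rw [herm, c3, star_mul', ← herm]; simp
  have hpos : (0 : ℝ) < 1 + lam ^ 2 := by positivity
  have hN : (1 + (lam : ℂ) ^ 2) ≠ 0 := by exact_mod_cast hpos.ne'
  have h00 : ρ (0, 0) (0, 0) = (1 + (lam : ℂ) ^ 2)⁻¹ := by
    simp only [Matrix.trace, Matrix.diag_apply, Fintype.sum_prod_type, Fin.sum_univ_two, c1, c2,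
      c3, r3] at htr
    apply eq_inv_of_mul_eq_one_left
    linear_combination htr
  have hsq : ((Real.sqrt (1 + lam ^ 2) : ℂ))⁻¹ * ((Real.sqrt (1 + lam ^ 2) : ℂ))⁻¹
      = (1 + (lam : ℂ) ^ 2)⁻¹ := by
    rw [← mul_inv, ← Complex.ofReal_mul, Real.mul_self_sqrt hpos.le]; push_cast; rfl
  ext ⟨i, i'⟩ ⟨j, j'⟩
  simp only [ψ, e00, e11, Matrix.vecMulVec_apply, Pi.star_apply, Pi.smul_apply, Pi.sub_apply,
    smul_eq_mul, star_mul', star_sub, star_inv₀, RCLike.star_def, Complex.conj_ofReal]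
  generalize ((Real.sqrt (1 + lam ^ 2) : ℂ))⁻¹ = t at hsq ⊢
  fin_cases i <;> fin_cases i' <;> fin_cases j <;> fin_cases j' <;>
    simp [c1, c2, c3, r1, r2, r3, h00, ← hsq] <;> ring
end

section
/- Let n = d_A·d_B, Γ > 0, and let T : M_n(ℂ) → M_n(ℂ) be a linear map that sends every density matrix to a separable density matrix (an entanglement-breaking channel on states). Let ρ : [0,∞) → M_n(ℂ) be differentiable with ρ'(t) = Γ(T(ρ(t)) − ρ(t)) and such that ρ(t) is a density matrix for every t ≥ 0. Then for every t > 0 there exists a separable density matrix σ_t such that ρ(t) = e^{−Γt}·ρ(0) + (1 − e^{−Γt})·σ_t; in particular, the classical dissipative channel creates no entanglement, and any entanglement present in ρ(0) is exponentially suppressed. -/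
/-!
The equation `ρ' = Γ (T ρ - ρ)` says that `(e^{Γs} ρ(s))' = (e^{Γs})' T(ρ(s))`, so
`σ = (e^{Γt} ρ(t) - ρ(0)) / (e^{Γt} - 1)` is the only possible choice, and it is a weighted average
of the separable states `T(ρ(s))`, `0 ≤ s ≤ t`. Such an average stays in a closed convex set. Instead
of an integral, `div_mem_of_deriv_mem` uses a vector-valued Cauchy mean value inequality: a
functional separating `σ` from the set would contradict the monotonicity of a real function.

The set of separable states is closed because it is compact: the density matrices form a compact set
(the image under `B ↦ Bᴴ B` of the Frobenius unit sphere), so the product states do too, and in finite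
dimension the convex hull of a compact set is compact by Carathéodory's theorem.
-/

open Matrix Kronecker
open scoped ComplexOrder

/-- A density matrix: positive semidefinite with trace one. -/
def IsDensityMatrix {ι : Type*} [Fintype ι] [DecidableEq ι] (ρ : Matrix ι ι ℂ) : Prop :=
  ρ.PosSemidef ∧ ρ.trace = 1

/-- A state on `ℂ^{d_A} ⊗ ℂ^{d_B}` is separable if it lies in the convex hull of
Kronecker products of density matrices on the two factors. -/
def IsSeparable' (dA dB : ℕ) (ρ : Matrix (Fin dA × Fin dB) (Fin dA × Fin dB) ℂ) : Prop :=
  ρ ∈ convexHull ℝ {X : Matrix (Fin dA × Fin dB) (Fin dA × Fin dB) ℂ |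
    ∃ (P : Matrix (Fin dA) (Fin dA) ℂ) (Q : Matrix (Fin dB) (Fin dB) ℂ),
      IsDensityMatrix P ∧ IsDensityMatrix Q ∧ X = P ⊗ₖ Q}

attribute [local instance] Matrix.normedAddCommGroup Matrix.normedSpace

/-- By Carathéodory's theorem the hull is a finite union, over `m ≤ dim E + 1`, of the continuous
images of the compact sets `stdSimplex × K^m`. -/
theorem isCompact_convexHull_of_isCompact {E : Type*} [NormedAddCommGroup E] [NormedSpace ℝ E]
    [FiniteDimensional ℝ E] {K : Set E} (hK : IsCompact K) : IsCompact (convexHull ℝ K) := by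
  have h : convexHull ℝ K = ⋃ m ∈ Finset.range (Module.finrank ℝ E + 2),
      (fun p : (Fin m → ℝ) × (Fin m → E) => ∑ i, p.1 i • p.2 i) ''
        (stdSimplex ℝ (Fin m) ×ˢ Set.univ.pi fun _ => K) := by
    apply Set.Subset.antisymm
    · intro x hx
      obtain ⟨ι, _, z, w, hz, hind, hw, hw1, rfl⟩ := eq_pos_convex_span_of_mem_convexHull hx
      have hcard : Fintype.card ι ≤ Module.finrank ℝ E + 1 :=
        hind.card_le_finrank_succ.trans (by gcongr; exact Submodule.finrank_le _)
      simp only [Set.mem_iUnion, Finset.mem_range]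
      let e := Fintype.equivFin ι
      refine ⟨Fintype.card ι, by omega, (fun i => w (e.symm i), fun i => z (e.symm i)),
        ⟨⟨fun i => (hw _).le, ?_⟩, fun i _ => hz ⟨_, rfl⟩⟩, ?_⟩
      · rw [← hw1]; exact Equiv.sum_comp e.symm w
      · exact Equiv.sum_comp e.symm fun i => w i • z i
    · simp only [Set.iUnion_subset_iff]
      rintro m - _ ⟨⟨w, z⟩, ⟨⟨hw, hw1⟩, hz⟩, rfl⟩
      exact (convex_convexHull ℝ K).sum_mem (fun i _ => hw i) hw1
        fun i _ => subset_convexHull ℝ K (hz i trivial)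
  rw [h]
  refine Finset.isCompact_biUnion _ fun m _ => ?_
  refine ((isCompact_stdSimplex ℝ (Fin m)).prod (isCompact_univ_pi fun _ => hK)).image ?_
  fun_prop

/-- A vector-valued Cauchy mean value inequality: if `f' = g' c` with `g' > 0` and `c` valued in a
closed convex set `S`, then the difference quotient of `f` against `g` lies in `S`. -/
theorem div_mem_of_deriv_mem {E : Type*} [NormedAddCommGroup E] [NormedSpace ℝ E] {S : Set E}
    (hconv : Convex ℝ S) (hclosed : IsClosed S) {f c : ℝ → E} {g g' : ℝ → ℝ} {a b : ℝ}
    (hab : a < b) (hg : ∀ s ∈ Set.Icc a b, HasDerivAt g (g' s) s)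
    (hf : ∀ s ∈ Set.Icc a b, HasDerivAt f (g' s • c s) s)
    (hpos : ∀ s ∈ Set.Icc a b, 0 < g' s) (hc : ∀ s ∈ Set.Icc a b, c s ∈ S) (hgab : g a < g b) :
    (g b - g a)⁻¹ • (f b - f a) ∈ S := by
  by_contra hS
  obtain ⟨φ, u, hφ, hu⟩ := geometric_hahn_banach_closed_point hconv hclosed hS
  have hd : ∀ s ∈ Set.Icc a b,
      HasDerivAt (fun s => φ (f s) - u * g s) (g' s * (φ (c s) - u)) s := by
    intro s hs
    have h1 := (φ.hasFDerivAt.comp_hasDerivAt s (hf s hs)).sub ((hg s hs).const_mul u)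
    convert! h1 using 1
    simp only [map_smul, smul_eq_mul]
    ring
  have hanti : StrictAntiOn (fun s => φ (f s) - u * g s) (Set.Icc a b) := by
    refine strictAntiOn_of_deriv_neg (convex_Icc a b)
      (fun s hs => (hd s hs).continuousAt.continuousWithinAt) fun s hs => ?_
    have hs' := interior_subset hs
    rw [(hd s hs').deriv]
    exact mul_neg_of_pos_of_neg (hpos s hs') (sub_neg.2 (hφ _ (hc s hs')))
  have hlt := hanti (Set.left_mem_Icc.2 hab.le) (Set.right_mem_Icc.2 hab.le) hab
  have hg0 : 0 < g b - g a := sub_pos.2 hgab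
  rw [map_smul, smul_eq_mul, inv_mul_eq_div, lt_div_iff₀ hg0, map_sub] at hu
  simp only at hlt
  linarith

theorem convex_isDensityMatrix {ι : Type*} [Fintype ι] [DecidableEq ι] :
    Convex ℝ {ρ : Matrix ι ι ℂ | IsDensityMatrix ρ} := by
  rintro x ⟨hx, hx1⟩ y ⟨hy, hy1⟩ a b ha hb hab
  refine ⟨(hx.smul ha).add (hy.smul hb), ?_⟩
  rw [trace_add, trace_smul, trace_smul, hx1, hy1, ← add_smul, hab, one_smul]

theorem trace_conjTranspose_mul_self_eq_sum {ι : Type*} [Fintype ι] (B : Matrix ι ι ℂ) :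
    (Bᴴ * B).trace = ((∑ i, ∑ j, ‖B j i‖ ^ 2 : ℝ) : ℂ) := by
  simp [trace, mul_apply, Complex.conj_mul']

open scoped MatrixOrder in
/-- A positive semidefinite matrix is `Bᴴ B`, and its trace is the squared Frobenius norm of `B`. -/
theorem setOf_isDensityMatrix_eq_image {ι : Type*} [Fintype ι] [DecidableEq ι] :
    {ρ : Matrix ι ι ℂ | IsDensityMatrix ρ} =
      (fun B : Matrix ι ι ℂ => Bᴴ * B) '' {B | ∑ i, ∑ j, ‖B j i‖ ^ 2 = 1} := by
  ext ρ
  constructor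
  · rintro ⟨hpos, htr⟩
    obtain ⟨B, rfl⟩ := CStarAlgebra.nonneg_iff_eq_star_mul_self.mp hpos.nonneg
    refine ⟨B, ?_, rfl⟩
    rw [star_eq_conjTranspose, trace_conjTranspose_mul_self_eq_sum] at htr
    exact_mod_cast htr
  · rintro ⟨B, hB, rfl⟩
    refine ⟨posSemidef_conjTranspose_mul_self B, ?_⟩
    rw [trace_conjTranspose_mul_self_eq_sum, Set.mem_ofPred.1 hB, Complex.ofReal_one]

theorem isCompact_isDensityMatrix {ι : Type*} [Fintype ι] [DecidableEq ι] :
    IsCompact {ρ : Matrix ι ι ℂ | IsDensityMatrix ρ} := by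
  have : ProperSpace (Matrix ι ι ℂ) := FiniteDimensional.proper ℂ _
  rw [setOf_isDensityMatrix_eq_image]
  refine IsCompact.image ?_ (by fun_prop)
  refine Metric.isCompact_of_isClosed_isBounded (isClosed_eq ?_ continuous_const) ?_
  · refine continuous_finsetSum _ fun i _ => continuous_finsetSum _ fun j _ => ?_
    exact (continuous_id.matrix_elem j i).norm.pow 2
  · refine isBounded_iff_forall_norm_le.2 ⟨1, fun B hB => ?_⟩
    refine (Matrix.norm_le_iff zero_le_one).2 fun j i => ?_
    have hle : ‖B j i‖ ^ 2 ≤ 1 := by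
      rw [← Set.mem_ofPred.1 hB]
      refine le_trans ?_ (Finset.single_le_sum
        (f := fun i => ∑ j, ‖B j i‖ ^ 2) (fun i _ => by positivity) (Finset.mem_univ i))
      exact Finset.single_le_sum
        (f := fun j => ‖B j i‖ ^ 2) (fun i _ => by positivity) (Finset.mem_univ j)
    exact (sq_le_one_iff₀ (norm_nonneg _)).1 hle

theorem isClosed_isSeparable (dA dB : ℕ) : IsClosed {ρ | IsSeparable' dA dB ρ} := by
  refine IsCompact.isClosed (isCompact_convexHull_of_isCompact ?_)
  have hc : Continuous fun p : Matrix (Fin dA) (Fin dA) ℂ × Matrix (Fin dB) (Fin dB) ℂ =>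
      p.1 ⊗ₖ p.2 := by
    refine continuous_matrix fun i j => ?_
    simp only [kroneckerMap_apply]
    exact (continuous_fst.matrix_elem _ _).mul (continuous_snd.matrix_elem _ _)
  convert! ((isCompact_isDensityMatrix (ι := Fin dA)).prod
    (isCompact_isDensityMatrix (ι := Fin dB))).image hc using 1
  ext X
  constructor
  · rintro ⟨P, Q, hP, hQ, rfl⟩
    exact ⟨(P, Q), ⟨hP, hQ⟩, rfl⟩
  · rintro ⟨⟨P, Q⟩, ⟨hP, hQ⟩, rfl⟩
    exact ⟨P, Q, hP, hQ, rfl⟩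

theorem IsSeparable'.isDensityMatrix {dA dB : ℕ}
    {ρ : Matrix (Fin dA × Fin dB) (Fin dA × Fin dB) ℂ} (h : IsSeparable' dA dB ρ) :
    IsDensityMatrix ρ := by
  refine convexHull_min (t := {ρ | IsDensityMatrix ρ}) ?_ convex_isDensityMatrix h
  rintro _ ⟨P, Q, hP, hQ, rfl⟩
  exact ⟨hP.1.kronecker hQ.1, by rw [trace_kronecker, hP.2, hQ.2, one_mul]⟩

theorem classical_channel_creates_no_entanglement (dA dB : ℕ) (Γ : ℝ) (hΓ : 0 < Γ)
    (T : Matrix (Fin dA × Fin dB) (Fin dA × Fin dB) ℂ →ₗ[ℂ]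
         Matrix (Fin dA × Fin dB) (Fin dA × Fin dB) ℂ)
    (hT : ∀ ρ, IsDensityMatrix ρ → IsDensityMatrix (T ρ) ∧ IsSeparable' dA dB (T ρ))
    (ρ : ℝ → Matrix (Fin dA × Fin dB) (Fin dA × Fin dB) ℂ)
    (hρdens : ∀ t : ℝ, 0 ≤ t → IsDensityMatrix (ρ t))
    (hρderiv : ∀ t : ℝ, 0 ≤ t → HasDerivAt ρ (Γ • (T (ρ t) - ρ t)) t) :
    ∀ t : ℝ, 0 < t → ∃ σ : Matrix (Fin dA × Fin dB) (Fin dA × Fin dB) ℂ,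
      IsDensityMatrix σ ∧ IsSeparable' dA dB σ ∧
      ρ t = Real.exp (-Γ * t) • ρ 0 + (1 - Real.exp (-Γ * t)) • σ := by
  intro t ht
  have hg : ∀ s : ℝ, HasDerivAt (fun s => Real.exp (Γ * s)) (Γ * Real.exp (Γ * s)) s := by
    intro s
    convert! ((hasDerivAt_id s).const_mul Γ).exp using 1
    simp [mul_comm]
  have hf : ∀ s : ℝ, 0 ≤ s → HasDerivAt (fun s => Real.exp (Γ * s) • ρ s)
      ((Γ * Real.exp (Γ * s)) • T (ρ s)) s := by
    intro s hs
    convert! (hg s).smul (hρderiv s hs) using 1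
    module
  have hlt : Real.exp (Γ * 0) < Real.exp (Γ * t) := by
    rw [Real.exp_lt_exp]; gcongr
  have hsep := div_mem_of_deriv_mem (S := {ρ | IsSeparable' dA dB ρ})
    (convex_convexHull ℝ _) (isClosed_isSeparable dA dB) ht (fun s _ => hg s)
    (fun s hs => hf s hs.1) (fun s _ => by positivity)
    (fun s hs => (hT _ (hρdens s hs.1)).2) hlt
  refine ⟨_, IsSeparable'.isDensityMatrix hsep, hsep, ?_⟩
  have hE : Real.exp (Γ * t) ≠ 0 := (Real.exp_pos _).ne'
  simp only [mul_zero, Real.exp_zero, one_smul] at hlt ⊢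
  have hne : Real.exp (Γ * t) - 1 ≠ 0 := (sub_pos.2 hlt).ne'
  have hcoef : (1 - (Real.exp (Γ * t))⁻¹) * (Real.exp (Γ * t) - 1)⁻¹ = (Real.exp (Γ * t))⁻¹ := by
    field_simp
  rw [neg_mul, Real.exp_neg, smul_smul, hcoef, smul_sub, smul_smul, inv_mul_cancel₀ hE, one_smul]
  abel
end

section
/- Let ψ₀ = (|00⟩+|11⟩)/√2, ψ₁ = (|00⟩−|11⟩)/√2, ψ₂ = (|01⟩+|10⟩)/√2, ψ₃ = (|01⟩−|10⟩)/√2 be the four Bell states in ℂ² ⊗ ℂ², let Ω = |ψ₀⟩⟨ψ₀|, and let Q_i = |ψ₀⟩⟨ψ_i| for i = 0,1,2,3. Then for every ρ ∈ M₄(ℂ): Σ_{i=0}^{3} 𝔏^{Q_i}(ρ) = tr(ρ)·Ω − ρ. In particular the maximally entangled state Ω is the steady state of this Lindblad evolution. -/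
/-!
The Bell states form an orthonormal basis of `ℂ² ⊗ ℂ²`. Normalisation of `ψ₀` gives
`Q_i† Q_i = |ψ_i⟩⟨ψ_i|`, and these projections sum to the identity (`sum_bell_proj`), so the
anticommutator part of the Lindbladian sums to `ρ`. The jump part is
`Q_i ρ Q_i† = ⟨ψ_i|ρ|ψ_i⟩ Ω = tr(ρ |ψ_i⟩⟨ψ_i|) Ω`, and the same resolution of the identity turns
the sum of the coefficients into `tr ρ`.
-/

open Matrix

/-- Standard basis vector `|ab⟩` of `ℂ² ⊗ ℂ²`. -/
noncomputable def ket2 (a b : Fin 2) : Fin 2 × Fin 2 → ℂ := Pi.single (a, b) 1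

/-- The four Bell states `ψ₀, ψ₁, ψ₂, ψ₃`. -/
noncomputable def bell : Fin 4 → (Fin 2 × Fin 2 → ℂ) :=
  ![(Real.sqrt 2 : ℂ)⁻¹ • (ket2 0 0 + ket2 1 1),
    (Real.sqrt 2 : ℂ)⁻¹ • (ket2 0 0 - ket2 1 1),
    (Real.sqrt 2 : ℂ)⁻¹ • (ket2 0 1 + ket2 1 0),
    (Real.sqrt 2 : ℂ)⁻¹ • (ket2 0 1 - ket2 1 0)]

/-- `Ω = |ψ₀⟩⟨ψ₀|`, the maximally entangled state. -/
noncomputable def Omega : Matrix (Fin 2 × Fin 2) (Fin 2 × Fin 2) ℂ :=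
  Matrix.vecMulVec (bell 0) (star (bell 0))

/-- `Q_i = |ψ₀⟩⟨ψ_i|`. -/
noncomputable def Qjump (i : Fin 4) : Matrix (Fin 2 × Fin 2) (Fin 2 × Fin 2) ℂ :=
  Matrix.vecMulVec (bell 0) (star (bell i))

lemma inv_sqrt_two_mul_self : (Real.sqrt 2 : ℂ)⁻¹ * (Real.sqrt 2 : ℂ)⁻¹ = 1 / 2 := by
  rw [← mul_inv, ← Complex.ofReal_mul, Real.mul_self_sqrt (by norm_num)]
  norm_num

lemma bell_zero_norm : star (bell 0) ⬝ᵥ bell 0 = 1 := by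
  simp [bell, ket2, dotProduct, Fintype.sum_prod_type, Pi.single_apply, inv_sqrt_two_mul_self]
  norm_num

/-- Resolution of the identity in the Bell basis. -/
lemma sum_bell_proj : ∑ i : Fin 4, vecMulVec (bell i) (star (bell i)) = 1 := by
  ext ⟨a, b⟩ ⟨c, d⟩
  fin_cases a <;> fin_cases b <;> fin_cases c <;> fin_cases d <;>
    simp [Fin.sum_univ_four, bell, ket2, vecMulVec_apply,
      inv_sqrt_two_mul_self] <;> norm_num

lemma Qjump_conjTranspose_mul_self (i : Fin 4) :
    (Qjump i)ᴴ * Qjump i = vecMulVec (bell i) (star (bell i)) := by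
  simp [Qjump, conjTranspose_vecMulVec, vecMulVec_mul_vecMulVec, bell_zero_norm]

lemma Qjump_mul_mul_conjTranspose (i : Fin 4) (ρ : Matrix (Fin 2 × Fin 2) (Fin 2 × Fin 2) ℂ) :
    Qjump i * ρ * (Qjump i)ᴴ = (ρ * vecMulVec (bell i) (star (bell i))).trace • Omega := by
  rw [Qjump, Omega, conjTranspose_vecMulVec, star_star, Matrix.mul_assoc, mul_vecMulVec,
    vecMulVec_mul_vecMulVec, mul_vecMulVec, trace_vecMulVec, dotProduct_comm, vecMulVec_smul]

theorem bell_jump_lindblad_eq (ρ : Matrix (Fin 2 × Fin 2) (Fin 2 × Fin 2) ℂ) :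
    ∑ i : Fin 4, Lindblad (Qjump i) ρ = ρ.trace • Omega - ρ := by
  simp only [Lindblad, Qjump_conjTranspose_mul_self, Qjump_mul_mul_conjTranspose,
    Finset.sum_sub_distrib, ← Finset.smul_sum, Finset.sum_add_distrib, ← Finset.sum_smul,
    ← Finset.sum_mul, ← Finset.mul_sum, ← trace_sum, sum_bell_proj, Matrix.one_mul,
    Matrix.mul_one]
  rw [← two_smul ℂ ρ, smul_smul]
  norm_num
end
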